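/- Let m ≥ 2 and let N be a symmetric lattice norm on ℝ^m (functions Fin m → ℝ) that is not proportional to the Euclidean norm (equivalently, the m-dimensional space (ℝ^m, N) is not isometric to ℓ₂^m). Let H be an infinite-dimensional separable real Hilbert space and equip X = (Fin m → H) with the norm ‖f‖ = N(fun i => ‖f i‖_H). Then every Flinn element u = (u_i)_i of X is supported on a single coordinate: there exists i₀ such that u i = 0 for all i ≠ i₀. -/

import Mathlib

open scoped RealInnerProductSpace

/-- `N` is a norm on `Fin m → ℝ`. -/
def IsNorm {m : ℕ} (N : (Fin m → ℝ) → ℝ) : Prop :=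
  (∀ x, N x = 0 ↔ x = 0) ∧
  (∀ (c : ℝ) (x : Fin m → ℝ), N (c • x) = |c| * N x) ∧
  (∀ x y, N (x + y) ≤ N x + N y)

/-- `N` is a lattice norm: it depends only on coordinatewise absolute values, monotonically. -/
def IsLatticeNorm {m : ℕ} (N : (Fin m → ℝ) → ℝ) : Prop :=
  IsNorm N ∧ (∀ x, N x = N fun i => |x i|) ∧
  ∀ x y : Fin m → ℝ, (∀ i, |x i| ≤ |y i|) → N x ≤ N y

/-- `N` is a symmetric lattice norm: a lattice norm invariant under permutations. -/
def IsSymmLatticeNorm {m : ℕ} (N : (Fin m → ℝ) → ℝ) : Prop :=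
  IsLatticeNorm N ∧ ∀ (π : Equiv.Perm (Fin m)) (x : Fin m → ℝ), N (x ∘ π) = N x

/-- The norm on `Fin m → H` induced by the norm `N`:  `‖f‖ = N (fun i => ‖f i‖)`. -/
noncomputable def XNorm {m : ℕ} (N : (Fin m → ℝ) → ℝ) {H : Type*} [NormedAddCommGroup H]
    (f : Fin m → H) : ℝ := N fun i => ‖f i‖

/-- The dual norm of the norm `XNorm N` on `Fin m → H`, where a vector `g : Fin m → H`
is identified with the functional `f ↦ ∑ i, ⟪g i, f i⟫`. -/
noncomputable def XDualNorm {m : ℕ} (N : (Fin m → ℝ) → ℝ) {H : Type*} [NormedAddCommGroup H]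
    [InnerProductSpace ℝ H] (g : Fin m → H) : ℝ :=
  sSup {s : ℝ | ∃ f : Fin m → H, XNorm N f ≤ 1 ∧ s = ∑ i, ⟪g i, f i⟫}

/-- `(u, g)` is a Flinn pair in `(Fin m → H, XNorm N)`, where every continuous linear
functional is represented by a vector `xs : Fin m → H` via `x ↦ ∑ i, ⟪xs i, x i⟫`. -/
def IsVFlinnPair {m : ℕ} (N : (Fin m → ℝ) → ℝ) {H : Type*} [NormedAddCommGroup H]
    [InnerProductSpace ℝ H] (u g : Fin m → H) : Prop :=
  g ≠ 0 ∧ ∀ x xs : Fin m → H,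
    (∑ i, ⟪xs i, x i⟫) = XNorm N x * XDualNorm N xs →
    0 ≤ (∑ i, ⟪g i, x i⟫) * (∑ i, ⟪xs i, u i⟫)

/-- `u` is a Flinn element of `(Fin m → H, XNorm N)`. -/
def IsVFlinn {m : ℕ} (N : (Fin m → ℝ) → ℝ) {H : Type*} [NormedAddCommGroup H]
    [InnerProductSpace ℝ H] (u : Fin m → H) : Prop :=
  ∃ g, IsVFlinnPair N u g

/-!
If `b` attains its dual `N`-norm at `a` in the nonnegative orthant, then for all unit vectors `h i`
the functional `(b i • h i)` attains its dual norm at `(a i • h i)`, so a Flinn pair `(u, g)`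
satisfies `0 ≤ (∑ a i * ⟪g i, h i⟫) * (∑ b i * ⟪u i, h i⟫)`. Taking `a = b = e i` forces `u i` and
`g i` to lie on a common ray. In dimension at least two the spheres are connected, so the numbers
`⟪u i, h i⟫ / ‖u i‖ = ⟪g i, h i⟫ / ‖g i‖` range independently over `[-1, 1]`, and the vectors
`(a i * ‖g i‖)` and `(b i * ‖u i‖)` of `ℝ^m` lie on a common ray as well. For `a = b = 1` this says
that `(‖g i‖)` is a positive multiple of `(‖u i‖)`; if two coordinates of `u` are nonzero, it then
follows, permuting coordinates, that `b` is a multiple of `a` for every such pair `(a, b)`.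
Hence every `a > 0` norms itself, which means `r(x) * cos θ ≤ r(y)` for `r(x) = N x / ‖x‖₂` and the
angle `θ` between `x` and `y`. So `r` has derivative zero on the orthant, and `N` is a multiple of
the Euclidean norm.
-/

open WithLp

section LinearAlgebra

theorem exists_linearMap_apply_eq_seminorm {E : Type*} [AddCommGroup E] [Module ℝ E]
    (p : Seminorm ℝ E) (a : E) : ∃ f : E →ₗ[ℝ] ℝ, f a = p a ∧ ∀ x, f x ≤ p x := by
  obtain rfl | ha := eq_or_ne a 0
  · exact ⟨0, by simp, fun x => apply_nonneg p x⟩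
  let f₀ : E →ₗ.[ℝ] ℝ := LinearPMap.mkSpanSingleton a (p a) ha
  have hf₀ : f₀ ⟨a, Submodule.mem_span_singleton_self a⟩ = p a :=
    LinearPMap.mkSpanSingleton_apply ℝ ℝ ha (p a)
  have hf₀_le : ∀ x : f₀.domain, f₀ x ≤ p x := by
    rintro ⟨x, hx⟩
    obtain ⟨c, rfl⟩ := Submodule.mem_span_singleton.1 hx
    calc f₀ ⟨c • a, hx⟩ = f₀ (c • ⟨a, Submodule.mem_span_singleton_self a⟩) := rfl
      _ = c * p a := by rw [f₀.map_smul, hf₀, smul_eq_mul]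
      _ ≤ |c| * p a := mul_le_mul_of_nonneg_right (le_abs_self c) (apply_nonneg p a)
      _ = p (c • a) := by rw [map_smul_eq_mul, Real.norm_eq_abs]
  obtain ⟨f, hf, hfp⟩ := exists_extension_of_le_sublinear f₀ p
    (fun c hc x => by rw [map_smul_eq_mul, Real.norm_of_nonneg hc.le]) (map_add_le_add p) hf₀_le
  exact ⟨f, (hf _).trans hf₀, hfp⟩

theorem mul_apply_comm_of_sameRay {ι : Type*} {p q : ι → ℝ} (h : SameRay ℝ p q) (i j : ι) :
    p i * q j = p j * q i := by
  obtain ⟨v, a, b, -, -, -, rfl, rfl⟩ := h.exists_eq_smul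
  simp only [Pi.smul_apply, smul_eq_mul]
  ring

end LinearAlgebra

section InnerProductSpace

variable {E : Type*} [NormedAddCommGroup E] [InnerProductSpace ℝ E]

theorem sameRay_of_inner_mul_inner_nonneg {p q : E}
    (h : ∀ x, ‖x‖ = 1 → 0 ≤ ⟪p, x⟫ * ⟪q, x⟫) : SameRay ℝ p q := by
  rw [sameRay_iff_norm_smul_eq, ← sub_eq_zero]
  -- On `z` the two functionals have opposite signs unless `z = 0`.
  set z := ‖p‖ • q - ‖q‖ • p with hz
  by_contra hz0
  have hpz : ⟪p, z⟫ = ‖p‖ * (⟪p, q⟫ - ‖p‖ * ‖q‖) := by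
    rw [hz, inner_sub_right, real_inner_smul_right, real_inner_smul_right,
      real_inner_self_eq_norm_sq]
    ring
  have hqz : ⟪q, z⟫ = ‖q‖ * (‖p‖ * ‖q‖ - ⟪p, q⟫) := by
    rw [hz, inner_sub_right, real_inner_smul_right, real_inner_smul_right,
      real_inner_self_eq_norm_sq, real_inner_comm]
    ring
  have hzz : ‖z‖ ^ 2 = 2 * (‖p‖ * ‖q‖) * (‖p‖ * ‖q‖ - ⟪p, q⟫) := by
    rw [← real_inner_self_eq_norm_sq]
    nth_rw 1 [hz]
    rw [inner_sub_left, real_inner_smul_left, real_inner_smul_left, hpz, hqz]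
    ring
  have hz_inv : 0 < ‖z‖⁻¹ * ‖z‖⁻¹ := by positivity
  have hsign : 0 ≤ ⟪p, z⟫ * ⟪q, z⟫ := by
    have hunit := h (‖z‖⁻¹ • z) (by simpa using norm_smul_inv_norm (𝕜 := ℝ) hz0)
    rw [real_inner_smul_right, real_inner_smul_right, mul_mul_mul_comm] at hunit
    exact nonneg_of_mul_nonneg_right hunit hz_inv
  have hfour : (‖z‖ ^ 2) ^ 2 = -4 * (‖p‖ * ‖q‖) * (⟪p, z⟫ * ⟪q, z⟫) := by
    rw [hzz, hpz, hqz]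
    ring
  have : 0 ≤ ‖p‖ * ‖q‖ * (⟪p, z⟫ * ⟪q, z⟫) := by positivity
  have : 0 < (‖z‖ ^ 2) ^ 2 := by positivity
  linarith

theorem exists_norm_eq_one_inner_eq (hE : 1 < Module.rank ℝ E) (e : E) {σ : ℝ} (hσ : |σ| ≤ 1) :
    ∃ x : E, ‖x‖ = 1 ∧ ⟪e, x⟫ = σ * ‖e‖ := by
  have : Nontrivial E := rank_pos_iff_nontrivial.1 (zero_lt_one.trans hE)
  obtain ⟨v, hv, hev⟩ : ∃ v : E, ‖v‖ = 1 ∧ ⟪e, v⟫ = ‖e‖ := by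
    obtain rfl | he := eq_or_ne e 0
    · simpa using exists_norm_eq E zero_le_one
    · refine ⟨‖e‖⁻¹ • e, by simpa using norm_smul_inv_norm (𝕜 := ℝ) he, ?_⟩
      rw [real_inner_smul_right, real_inner_self_eq_norm_sq, sq,
        inv_mul_cancel_left₀ (norm_ne_zero_iff.2 he)]
  obtain ⟨hσ₁, hσ₂⟩ := abs_le.1 hσ
  obtain ⟨x, hx, hex⟩ := (isPreconnected_sphere hE (0 : E) 1).intermediate_value
    (a := -v) (b := v) (f := fun x => ⟪e, x⟫) (by simp [hv]) (by simp [hv]) (by fun_prop)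
    (show σ * ‖e‖ ∈ Set.Icc _ _ by
      rw [inner_neg_right, hev]
      constructor <;> nlinarith [norm_nonneg e])
  exact ⟨x, by simpa using hx, hex⟩

theorem exists_norm_eq_one_inner_eq_of_sameRay (hE : 1 < Module.rank ℝ E) {p q : E}
    (hpq : SameRay ℝ p q) {σ : ℝ} (hσ : |σ| ≤ 1) :
    ∃ x : E, ‖x‖ = 1 ∧ ⟪p, x⟫ = σ * ‖p‖ ∧ ⟪q, x⟫ = σ * ‖q‖ := by
  obtain ⟨x, hx, hsum⟩ := exists_norm_eq_one_inner_eq hE (p + q) hσ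
  obtain ⟨a, b, ha, hb, -, hp, hq⟩ := hpq.exists_eq_smul_add
  refine ⟨x, hx, ?_, ?_⟩
  · rw [hp, real_inner_smul_left, hsum, norm_smul_of_nonneg ha]
    ring
  · rw [hq, real_inner_smul_left, hsum, norm_smul_of_nonneg hb]
    ring

end InnerProductSpace

section Constancy

theorem eq_of_forall_abs_sub_le_mul_sq {E : Type*} [NormedAddCommGroup E] [NormedSpace ℝ E]
    {s : Set E} (hs : Convex ℝ s) {f : E → ℝ}
    (hf : ∀ x ∈ s, ∃ C, ∀ y ∈ s, |f y - f x| ≤ C * ‖y - x‖ ^ 2) {x y : E} (hx : x ∈ s)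
    (hy : y ∈ s) : f x = f y := by
  have hderiv : ∀ z ∈ s, HasFDerivWithinAt f (0 : E →L[ℝ] ℝ) s z := by
    intro z hz
    obtain ⟨C, hC⟩ := hf z hz
    have hO : (fun w => f w - f z) =O[nhdsWithin z s] fun w => ‖w - z‖ ^ 2 :=
      .of_bound C <| eventually_mem_nhdsWithin.mono fun w hw => by simpa using hC w hw
    simpa using (hO.hasFDerivWithinAt hz one_lt_two).add_const (f z)
  have hle := hs.norm_image_sub_le_of_norm_hasFDerivWithin_le hderiv (C := 0) (by simp) hx hy
  rw [zero_mul, norm_le_zero_iff, sub_eq_zero] at hle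
  exact hle.symm

variable {E : Type*} [NormedAddCommGroup E] [InnerProductSpace ℝ E]

theorem norm_mul_norm_sq_sub_inner_sq_le (x y : E) :
    (‖x‖ * ‖y‖) ^ 2 - ⟪x, y⟫ ^ 2 ≤ ‖x - y‖ ^ 2 * ‖y‖ ^ 2 := by
  rw [norm_sub_sq_real]
  linarith [sq_nonneg (‖y‖ ^ 2 - ⟪x, y⟫)]

/- The hypothesis says `f x * cos² θ ≤ f y` for the angle `θ` between `x` and `y`. As
`sin θ ≤ ‖y - x‖ / ‖x‖`, the increment `f y - f x` is quadratically small, so `f` has derivative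
zero. -/
theorem eq_of_mul_inner_sq_le {s : Set E} (hs : Convex ℝ s) (h0 : 0 ∉ s) {f : E → ℝ} {C : ℝ}
    (hC : ∀ x ∈ s, f x ≤ C)
    (hf : ∀ x ∈ s, ∀ y ∈ s, f x * ⟪x, y⟫ ^ 2 ≤ f y * (‖x‖ * ‖y‖) ^ 2) {x y : E} (hx : x ∈ s)
    (hy : y ∈ s) : f x = f y := by
  have hpos : ∀ {z}, z ∈ s → 0 < ‖z‖ := fun hz => norm_pos_iff.2 fun h => h0 (h ▸ hz)
  have hgap : ∀ z ∈ s, ∀ w ∈ s,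
      (f z - f w) * (‖z‖ * ‖w‖) ^ 2 ≤ |C| * ((‖z‖ * ‖w‖) ^ 2 - ⟪z, w⟫ ^ 2) := by
    intro z hz w hw
    have hgram : 0 ≤ (‖z‖ * ‖w‖) ^ 2 - ⟪z, w⟫ ^ 2 :=
      sub_nonneg.2 (sq_le_sq' (neg_le_of_abs_le (abs_real_inner_le_norm z w))
        (real_inner_le_norm z w))
    have := mul_le_mul_of_nonneg_right ((hC z hz).trans (le_abs_self C)) hgram
    linarith [hf z hz w hw]
  refine eq_of_forall_abs_sub_le_mul_sq hs (fun z hzs => ⟨|C| / ‖z‖ ^ 2, fun w hws => ?_⟩) hx hy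
  have hz := hpos hzs
  have hw := hpos hws
  have hgram : |C| * ((‖z‖ * ‖w‖) ^ 2 - ⟪z, w⟫ ^ 2) ≤ |C| * (‖w - z‖ ^ 2 * ‖w‖ ^ 2) :=
    mul_le_mul_of_nonneg_left (norm_sub_rev z w ▸ norm_mul_norm_sq_sub_inner_sq_le z w)
      (abs_nonneg C)
  have habs : |f w - f z| * (‖z‖ * ‖w‖) ^ 2 ≤ |C| * ((‖z‖ * ‖w‖) ^ 2 - ⟪z, w⟫ ^ 2) := by
    have hzw := hgap z hzs w hws
    have hwz := hgap w hws z hzs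
    rw [mul_comm ‖w‖, real_inner_comm] at hwz
    rcases abs_cases (f w - f z) with ⟨h, -⟩ | ⟨h, -⟩ <;> rw [h]
    · exact hwz
    · rwa [neg_sub]
  rw [div_mul_eq_mul_div, le_div_iff₀ (by positivity)]
  refine le_of_mul_le_mul_right ?_ (pow_pos hw 2)
  linarith

end Constancy

section LatticeNorm

variable {m : ℕ} {N : (Fin m → ℝ) → ℝ}

/-- A norm in the sense of `IsNorm`, bundled as a seminorm so that the library applies to it. -/
def IsNorm.toSeminorm (hN : IsNorm N) : Seminorm ℝ (Fin m → ℝ) :=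
  Seminorm.of N hN.2.2 hN.2.1

theorem IsNorm.pos (hN : IsNorm N) {x : Fin m → ℝ} (hx : x ≠ 0) : 0 < N x :=
  (apply_nonneg hN.toSeminorm x).lt_of_ne' fun h => hx ((hN.1 x).1 h)

theorem IsNorm.nonneg (hN : IsNorm N) (x : Fin m → ℝ) : 0 ≤ N x :=
  apply_nonneg hN.toSeminorm x

theorem IsLatticeNorm.le_of_le (hN : IsLatticeNorm N) {x y : Fin m → ℝ} (hx : 0 ≤ x)
    (hxy : x ≤ y) : N x ≤ N y :=
  hN.2.2 x y fun i => abs_le_abs_of_nonneg (hx i) (hxy i)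

theorem IsLatticeNorm.le_norm_mul (hN : IsLatticeNorm N) (x : EuclideanSpace ℝ (Fin m)) :
    N x ≤ ‖x‖ * N 1 := by
  rw [← abs_norm x, ← hN.1.2.1]
  refine hN.2.2 _ _ fun i => ?_
  simpa using PiLp.norm_apply_le x i

/-- `b`, viewed as the functional `y ↦ b ⬝ᵥ y`, attains its `N`-dual norm at `a`, where both
vectors are nonnegative and `a ≠ 0`. For a lattice norm it is enough to test the functional on the
nonnegative cone, and `b` is not normalized (it may even vanish). -/
def IsNormingPair (N : (Fin m → ℝ) → ℝ) (a b : Fin m → ℝ) : Prop :=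
  0 < a ∧ 0 ≤ b ∧ ∀ y, 0 ≤ y → b ⬝ᵥ y * N a ≤ N y * b ⬝ᵥ a

theorem IsNormingPair.single (hN : IsLatticeNorm N) (i : Fin m) :
    IsNormingPair N (Pi.single i 1) (Pi.single i 1) := by
  refine ⟨Pi.single_pos.2 one_pos, Pi.single_nonneg.2 zero_le_one, fun y hy => ?_⟩
  simp only [single_dotProduct, Pi.single_eq_same, one_mul, mul_one]
  rw [← abs_of_nonneg (hy i), ← hN.1.2.1]
  refine hN.2.2 _ _ fun j => ?_
  obtain rfl | hij := eq_or_ne j i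
  · simp
  · simp [hij]

theorem IsNormingPair.one [NeZero m] (hN : IsSymmLatticeNorm N) : IsNormingPair N 1 1 := by
  refine ⟨zero_lt_one, zero_le_one, fun y hy => ?_⟩
  -- The cyclic shifts of `y` sum to a constant vector.
  have hshift : ∑ k, y ∘ Equiv.addRight k = (1 ⬝ᵥ y) • (1 : Fin m → ℝ) := by
    ext i
    simpa [one_dotProduct] using Equiv.sum_comp (Equiv.addLeft i) y
  calc 1 ⬝ᵥ y * N 1 = N (∑ k, y ∘ Equiv.addRight k) := by
        rw [hshift, hN.1.1.2.1, abs_of_nonneg (dotProduct_nonneg_of_nonneg zero_le_one hy)]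
    _ ≤ ∑ k, N (y ∘ Equiv.addRight k) :=
        Finset.le_sum_of_subadditive N ((hN.1.1.1 0).2 rfl).le hN.1.1.2.2 _ _
    _ = N y * 1 ⬝ᵥ 1 := by
        simp only [hN.2]
        simp [mul_comm]

theorem IsNormingPair.comp_perm (hN : IsSymmLatticeNorm N) {a b : Fin m → ℝ}
    (hab : IsNormingPair N a b) (π : Equiv.Perm (Fin m)) : IsNormingPair N (a ∘ π) (b ∘ π) := by
  obtain ⟨ha, hb, hle⟩ := hab
  refine ⟨?_, fun i => hb (π i), fun y hy => ?_⟩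
  · refine lt_of_le_of_ne (fun i => ha.le (π i)) fun h => ha.ne ?_
    exact π.surjective.injective_comp_right h
  · have := hle (y ∘ π.symm) fun i => hy (π.symm i)
    rwa [hN.2, ← comp_equiv_dotProduct_comp_equiv b a π, dotProduct_comp_equiv_symm, ← hN.2 π a]
      at this

theorem exists_isNormingPair (hN : IsLatticeNorm N) {a : Fin m → ℝ} (ha : 0 < a) :
    ∃ b, IsNormingPair N a b ∧ 0 < b ⬝ᵥ a := by
  obtain ⟨f, hfa, hf⟩ := exists_linearMap_apply_eq_seminorm hN.1.toSeminorm a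
  obtain ⟨c, rfl⟩ := (dotProductEquiv ℝ (Fin m)).surjective f
  replace hfa : c ⬝ᵥ a = N a := hfa
  replace hf : ∀ y, c ⬝ᵥ y ≤ N y := hf
  have hpos : N a ≤ c⁺ ⬝ᵥ a :=
    hfa ▸ dotProduct_le_dotProduct_of_nonneg_right (le_posPart c) ha.le
  have hle : ∀ y, 0 ≤ y → c⁺ ⬝ᵥ y ≤ N y := by
    intro y hy
    let y' : Fin m → ℝ := fun i => if 0 ≤ c i then y i else 0
    have hy' : c⁺ ⬝ᵥ y = c ⬝ᵥ y' := by
      refine Finset.sum_congr rfl fun i _ => ?_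
      by_cases hi : 0 ≤ c i
      · simp [y', hi, Pi.posPart_apply]
      · simp [y', hi, Pi.posPart_apply, (not_le.1 hi).le]
    rw [hy']
    refine (hf y').trans (hN.le_of_le (fun i => ?_) fun i => ?_)
    · exact ite_nonneg (hy i) le_rfl
    · exact (ite_le_sup _ _ _).trans (sup_le le_rfl (hy i))
  refine ⟨c⁺, ⟨ha, posPart_nonneg c, fun y hy => ?_⟩, (hN.1.pos ha.ne').trans_le hpos⟩
  exact mul_le_mul (hle y hy) hpos (hN.1.nonneg a) (hN.1.nonneg y)

theorem isNormingPair_self_of_forall_mul_comm (hN : IsLatticeNorm N)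
    (hN' : ∀ a b, IsNormingPair N a b → ∀ i j, a i * b j = a j * b i) {a : Fin m → ℝ}
    (ha : 0 < a) : IsNormingPair N a a := by
  obtain ⟨b, hab, hba⟩ := exists_isNormingPair hN ha
  have hprop : (b ⬝ᵥ a) • a = (a ⬝ᵥ a) • b := by
    ext i
    simp only [Pi.smul_apply, smul_eq_mul, dotProduct, Finset.sum_mul]
    exact Finset.sum_congr rfl fun j _ => by linear_combination a j * hN' a b hab i j
  refine ⟨ha, ha.le, fun y hy => le_of_mul_le_mul_left ?_ hba⟩
  calc b ⬝ᵥ a * (a ⬝ᵥ y * N a) = ((b ⬝ᵥ a) • a) ⬝ᵥ y * N a := by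
        rw [smul_dotProduct, smul_eq_mul, mul_assoc]
    _ = a ⬝ᵥ a * (b ⬝ᵥ y * N a) := by rw [hprop, smul_dotProduct, smul_eq_mul, mul_assoc]
    _ ≤ a ⬝ᵥ a * (N y * b ⬝ᵥ a) :=
        mul_le_mul_of_nonneg_left (hab.2.2 y hy)
          (dotProduct_nonneg_of_nonneg ha.le ha.le)
    _ = b ⬝ᵥ a * (N y * a ⬝ᵥ a) := by ring

theorem IsNormingPair.div_norm_mul_inner_sq_le (hN : IsNorm N) {x y : EuclideanSpace ℝ (Fin m)}
    (hx : IsNormingPair N x x) (hy : 0 < y.ofLp) :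
    N x / ‖x‖ * ⟪x, y⟫ ^ 2 ≤ N y / ‖y‖ * (‖x‖ * ‖y‖) ^ 2 := by
  have hx_pos : 0 < ‖x‖ := norm_pos_iff.2 fun h => hx.1.ne' (congrArg ofLp h)
  have hy_pos : 0 < ‖y‖ := norm_pos_iff.2 fun h => hy.ne' (congrArg ofLp h)
  have hxx : x.ofLp ⬝ᵥ x.ofLp = ‖x‖ ^ 2 := by
    rw [← real_inner_self_eq_norm_sq, EuclideanSpace.inner_eq_star_dotProduct, star_trivial]
  have hxy : x.ofLp ⬝ᵥ y.ofLp = ⟪x, y⟫ := by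
    rw [EuclideanSpace.inner_eq_star_dotProduct, star_trivial, dotProduct_comm]
  have hpair : ⟪x, y⟫ * N x ≤ N y * ‖x‖ ^ 2 := hxx ▸ hxy ▸ hx.2.2 y hy.le
  have hinner : 0 ≤ ⟪x, y⟫ := hxy ▸ dotProduct_nonneg_of_nonneg hx.1.le hy.le
  calc N x / ‖x‖ * ⟪x, y⟫ ^ 2 = ⟪x, y⟫ * N x * (⟪x, y⟫ / ‖x‖) := by ring
    _ ≤ N y * ‖x‖ ^ 2 * (‖x‖ * ‖y‖ / ‖x‖) := by
      gcongr
      · exact mul_nonneg (hN.nonneg y) (sq_nonneg _)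
      · exact real_inner_le_norm x y
    _ = N y / ‖y‖ * (‖x‖ * ‖y‖) ^ 2 := by field_simp

theorem exists_eq_mul_sqrt_of_isNormingPair_self [NeZero m] (hN : IsLatticeNorm N)
    (hself : ∀ a, 0 < a → IsNormingPair N a a) :
    ∃ c : ℝ, 0 < c ∧ ∀ x : Fin m → ℝ, N x = c * Real.sqrt (∑ i, x i ^ 2) := by
  let cone : Set (EuclideanSpace ℝ (Fin m)) := ofLp ⁻¹' Set.Ioi 0
  have hcone : Convex ℝ cone :=
    (convex_Ioi (𝕜 := ℝ) (0 : Fin m → ℝ)).linear_preimage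
      (WithLp.linearEquiv 2 ℝ (Fin m → ℝ)).toLinearMap
  have hnorm_pos : ∀ {x}, x ∈ cone → 0 < ‖x‖ := fun {x} hx =>
    norm_pos_iff.2 fun h => hx.ne' (congrArg ofLp h)
  have hratio : ∀ x ∈ cone, ∀ y ∈ cone,
      N x / ‖x‖ * ⟪x, y⟫ ^ 2 ≤ N y / ‖y‖ * (‖x‖ * ‖y‖) ^ 2 :=
    fun x hx y hy => (hself x hx).div_norm_mul_inner_sq_le hN.1 hy
  have hbound : ∀ x ∈ cone, N x / ‖x‖ ≤ N 1 := fun x hx =>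
    (div_le_iff₀' (hnorm_pos hx)).2 (hN.le_norm_mul x)
  have hone : toLp 2 1 ∈ cone := zero_lt_one (α := Fin m → ℝ)
  refine ⟨N 1 / ‖toLp 2 (1 : Fin m → ℝ)‖,
    div_pos (hN.1.pos one_ne_zero) (hnorm_pos hone), fun x => ?_⟩
  obtain rfl | hx := eq_or_ne x 0
  · simp [(hN.1.1 0).2]
  have habs : toLp 2 |x| ∈ cone := lt_of_le_of_ne (abs_nonneg x) fun h =>
    hx <| funext fun i => abs_eq_zero.1 (congrFun h.symm i)
  have hconst : N |x| / ‖toLp 2 |x|‖ = N 1 / ‖toLp 2 (1 : Fin m → ℝ)‖ :=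
    eq_of_mul_inner_sq_le hcone (fun h => (hnorm_pos h).ne' norm_zero) hbound hratio habs hone
  have hnorm : ‖toLp 2 |x|‖ = Real.sqrt (∑ i, x i ^ 2) := by simp [EuclideanSpace.norm_eq]
  rw [← hconst, ← hnorm, div_mul_cancel₀ _ (hnorm_pos habs).ne']
  exact hN.2.1 x

end LatticeNorm

section FlinnPair

variable {m : ℕ} {N : (Fin m → ℝ) → ℝ} {H : Type*} [NormedAddCommGroup H]
  [InnerProductSpace ℝ H]

theorem XNorm_smul (hN : IsNorm N) (c : ℝ) (f : Fin m → H) :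
    XNorm N (c • f) = |c| * XNorm N f := by
  simp only [XNorm, Pi.smul_apply, norm_smul, Real.norm_eq_abs]
  rw [show (fun i => |c| * ‖f i‖) = |c| • fun i => ‖f i‖ from rfl, hN.2.1, abs_abs]

theorem sum_inner_eq_XNorm_mul_XDualNorm (hN : IsNorm N) {f g : Fin m → H} (hf : 0 < XNorm N f)
    (hg : ∀ y : Fin m → H, (∑ i, ⟪g i, y i⟫) * XNorm N f ≤ XNorm N y * ∑ i, ⟪g i, f i⟫) :
    ∑ i, ⟪g i, f i⟫ = XNorm N f * XDualNorm N g := by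
  have hgf : 0 ≤ ∑ i, ⟪g i, f i⟫ := by
    have := hg ((-1 : ℝ) • f)
    rw [XNorm_smul hN] at this
    simp only [Pi.smul_apply, neg_smul, one_smul, inner_neg_right, Finset.sum_neg_distrib, neg_mul,
      abs_neg, abs_one, one_mul] at this
    nlinarith
  have hdual : XDualNorm N g = (XNorm N f)⁻¹ * ∑ i, ⟪g i, f i⟫ := by
    refine IsGreatest.csSup_eq ⟨⟨(XNorm N f)⁻¹ • f, ?_, ?_⟩, ?_⟩
    · rw [XNorm_smul hN, abs_of_pos (inv_pos.2 hf), inv_mul_cancel₀ hf.ne']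
    · simp only [Pi.smul_apply, real_inner_smul_right, Finset.mul_sum]
    · rintro - ⟨y, hy, rfl⟩
      rw [inv_mul_eq_div, le_div_iff₀ hf]
      exact (hg y).trans (mul_le_of_le_one_left hgf hy)
  rw [hdual, mul_inv_cancel_left₀ hf.ne']

theorem IsNormingPair.sum_inner_eq (hN : IsNorm N) {a b : Fin m → ℝ} (hab : IsNormingPair N a b)
    {h : Fin m → H} (hh : ∀ i, ‖h i‖ = 1) :
    ∑ i, ⟪b i • h i, a i • h i⟫ =
      XNorm N (fun i => a i • h i) * XDualNorm N (fun i => b i • h i) := by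
  obtain ⟨ha, hb, hle⟩ := hab
  have hnorm : XNorm N (fun i => a i • h i) = N a :=
    congrArg N <| funext fun i => by rw [norm_smul_of_nonneg (ha.le i), hh, mul_one]
  have hinner : ∑ i, ⟪b i • h i, a i • h i⟫ = b ⬝ᵥ a :=
    Finset.sum_congr rfl fun i _ => by
      rw [real_inner_smul_left, real_inner_smul_right, real_inner_self_eq_norm_sq, hh, one_pow,
        mul_one]
  refine sum_inner_eq_XNorm_mul_XDualNorm hN (hnorm ▸ hN.pos ha.ne') fun y => ?_
  have hy : ∑ i, ⟪b i • h i, y i⟫ ≤ b ⬝ᵥ fun i => ‖y i‖ := by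
    refine Finset.sum_le_sum fun i _ => (real_inner_le_norm _ _).trans_eq ?_
    rw [norm_smul_of_nonneg (hb i), hh, mul_one]
  rw [hnorm, hinner]
  exact (mul_le_mul_of_nonneg_right hy (hN.nonneg a)).trans (hle _ fun i => norm_nonneg (y i))

namespace IsVFlinnPair

variable {u g : Fin m → H}

theorem sum_mul_sum_nonneg (hug : IsVFlinnPair N u g) (hN : IsNorm N) {a b : Fin m → ℝ}
    (hab : IsNormingPair N a b) {h : Fin m → H} (hh : ∀ i, ‖h i‖ = 1) :
    0 ≤ (∑ i, a i * ⟪g i, h i⟫) * ∑ i, b i * ⟪u i, h i⟫ := by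
  have := hug.2 _ _ (hab.sum_inner_eq hN hh)
  simp only [real_inner_smul_left, real_inner_smul_right] at this
  simpa only [real_inner_comm] using this

theorem sameRay_apply (hug : IsVFlinnPair N u g) (hN : IsLatticeNorm N) (i : Fin m) :
    SameRay ℝ (g i) (u i) :=
  sameRay_of_inner_mul_inner_nonneg fun x hx => by
    simpa [Pi.single_apply] using
      hug.sum_mul_sum_nonneg hN.1 (.single hN i) (h := fun _ => x) fun _ => hx

theorem sameRay_mul_norm (hug : IsVFlinnPair N u g) (hN : IsLatticeNorm N)
    (hH : 1 < Module.rank ℝ H) {a b : Fin m → ℝ} (hab : IsNormingPair N a b) :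
    SameRay ℝ (fun i => a i * ‖g i‖) (fun i => b i * ‖u i‖) := by
  suffices SameRay ℝ (toLp 2 fun i => a i * ‖g i‖) (toLp 2 fun i => b i * ‖u i‖) from
    this.map (WithLp.linearEquiv 2 ℝ (Fin m → ℝ)).toLinearMap
  refine sameRay_of_inner_mul_inner_nonneg fun σ hσ => ?_
  have hσ_le : ∀ i, |σ i| ≤ 1 := fun i => hσ ▸ PiLp.norm_apply_le σ i
  choose h hh hg hu using fun i =>
    exists_norm_eq_one_inner_eq_of_sameRay hH (hug.sameRay_apply hN i) (hσ_le i)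
  convert hug.sum_mul_sum_nonneg hN.1 hab hh using 2 <;>
    simp only [PiLp.inner_apply, RCLike.inner_apply, conj_trivial, hg, hu] <;>
    exact Finset.sum_congr rfl fun i _ => by ring

theorem exists_norm_eq_mul_norm [NeZero m] (hug : IsVFlinnPair N u g) (hN : IsSymmLatticeNorm N)
    (hH : 1 < Module.rank ℝ H) (hu : u ≠ 0) : ∃ r > 0, ∀ i, ‖g i‖ = r * ‖u i‖ := by
  have hray := hug.sameRay_mul_norm hN.1 hH (.one hN)
  simp only [Pi.one_apply, one_mul] at hray
  obtain ⟨r, hr, h⟩ := hray.exists_pos_right (by simpa [funext_iff] using hug.1)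
    (by simpa [funext_iff] using hu)
  exact ⟨r, hr, congrFun h⟩

theorem normingPair_mul_comm (hug : IsVFlinnPair N u g) (hN : IsSymmLatticeNorm N)
    (hH : 1 < Module.rank ℝ H) {i j : Fin m} (hij : i ≠ j) (hui : u i ≠ 0) (huj : u j ≠ 0)
    {a b : Fin m → ℝ} (hab : IsNormingPair N a b) (k l : Fin m) : a k * b l = a l * b k := by
  have : NeZero m := ⟨(Fin.pos i).ne'⟩
  obtain ⟨r, hr, hgu⟩ := hug.exists_norm_eq_mul_norm hN hH fun h => hui (congrFun h i)
  obtain rfl | hkl := eq_or_ne k l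
  · rfl
  obtain ⟨π, hi, hj⟩ := MulAction.is_two_pretransitive_iff.1
    (Equiv.Perm.isMultiplyPretransitive (Fin m) 2) hij hkl
  rw [Equiv.Perm.smul_def] at hi hj
  have h := mul_apply_comm_of_sameRay (hug.sameRay_mul_norm hN.1 hH (hab.comp_perm hN π)) i j
  simp only [Function.comp_apply, hi, hj, hgu] at h
  have hpos : 0 < r * ‖u i‖ * ‖u j‖ := by positivity
  exact mul_right_cancel₀ hpos.ne' (by linear_combination h)

end IsVFlinnPair

end FlinnPair

theorem flinn_elements_supported_on_single_coordinate_of_infinite_dim_general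
    {m : ℕ} (N : (Fin m → ℝ) → ℝ) (hN : IsSymmLatticeNorm N)
    (hN2 : ¬ ∃ c : ℝ, 0 < c ∧ ∀ x : Fin m → ℝ, N x = c * Real.sqrt (∑ i, x i ^ 2))
    {H : Type*} [NormedAddCommGroup H] [InnerProductSpace ℝ H] (hH : 1 < Module.rank ℝ H)
    (u : Fin m → H) (hu : IsVFlinn N u) :
    ∃ i₀ : Fin m, ∀ i, i ≠ i₀ → u i = 0 := by
  obtain ⟨g, hug⟩ := hu
  obtain ⟨k, -⟩ := Function.ne_iff.1 hug.1
  have : NeZero m := ⟨(Fin.pos k).ne'⟩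
  by_contra! hsupp
  obtain ⟨i, -, hui⟩ := hsupp k
  obtain ⟨j, hji, huj⟩ := hsupp i
  exact hN2 <| exists_eq_mul_sqrt_of_isNormingPair_self hN.1 fun a ha =>
    isNormingPair_self_of_forall_mul_comm hN.1
      (fun _ _ hab => hug.normingPair_mul_comm hN hH hji.symm hui huj hab) ha

theorem flinn_elements_supported_on_single_coordinate_of_infinite_dim
    {m : ℕ} (hm : 2 ≤ m) (N : (Fin m → ℝ) → ℝ)
    (hN : IsSymmLatticeNorm N)
    (hN2 : ¬ ∃ c : ℝ, 0 < c ∧ ∀ x : Fin m → ℝ, N x = c * Real.sqrt (∑ i, x i ^ 2))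
    {H : Type*} [NormedAddCommGroup H] [InnerProductSpace ℝ H] [CompleteSpace H]
    [TopologicalSpace.SeparableSpace H] (hinf : ¬ FiniteDimensional ℝ H)
    (u : Fin m → H) (hu : IsVFlinn N u) :
    ∃ i₀ : Fin m, ∀ i, i ≠ i₀ → u i = 0 := by
  have hrank : Cardinal.aleph0 ≤ Module.rank ℝ H :=
    not_lt.1 fun h => hinf (Module.rank_lt_aleph0_iff.1 h)
  exact flinn_elements_supported_on_single_coordinate_of_infinite_dim_general N hN hN2
    (Cardinal.one_lt_aleph0.trans_le hrank) u hu
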